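/- There exists ε₀ ∈ (0,1) such that for every ε ∈ (0, ε₀] there exist a real λ₀ ≥ 1 and a natural number n₀ with the following property: for every n ≥ n₀, every m ≥ 1, every real λ with λ₀ ≤ λ and m²·λ ≤ ε·n, every integer l with m²·λ/ε < l ≤ n, and every nonempty family U of m-element subsets of [n], there exists a set g ⊆ [n] with |g| ≤ κ(U) / ln( ε·l/(m²·λ) ) such that |Ext(U_g, l)| ≥ C(n − |g|, l − |g|) · (1 − e^{−λ}). -/

import Mathlib

/-- The `l`-extension of a family `U` inside the space `[n] = {1, …, n}`:
all `l`-element subsets of `[n]` containing some member of `U`. -/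
def extFam (n : ℕ) (U : Finset (Finset ℕ)) (l : ℕ) : Finset (Finset ℕ) :=
  ((Finset.Icc 1 n).powersetCard l).filter (fun t => ∃ s ∈ U, s ⊆ t)

/-- The sparsity `κ(U) = ln C(n,m) − ln |U|` of a family of `m`-subsets of `[n]`. -/
noncomputable def sparsity (n m : ℕ) (U : Finset (Finset ℕ)) : ℝ :=
  Real.log (n.choose m) - Real.log U.card

/-!
Write `r = ε l / (m² λ)` and choose `g` maximising the density of `U` among the `m`-sets
containing `g`, divided by `r ^ |g|`. Densities are at most `1`, so comparison with `∅` bounds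
`|g|` by `κ(U) / ln r`; comparison with the sets `g ∪ h` shows that the link of `U` at `g` is
spread, a random member containing a given `h` with probability at most
`((m - |g|) r / (n - |g|)) ^ |h|`. For a spread family, the second moment method shows that
a random set of size `q ≈ l / λ` contains a member with probability at least `1 - 1/e`.
A random `l`-set is at least as good as `k ≈ λ` independent random `q`-sets, so it misses every
member with probability at most `e ^ (-λ)`.
-/

section

open Finset
open scoped BigOperators Pointwise

section InclusionProbability

/-- The probability `C(q, a) / C(N, a)` that a uniformly random `q`-subset of an `N`-element set
contains a given `a`-element set. -/
noncomputable def inclusionProb (N q a : ℕ) : ℝ := q.choose a / N.choose a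

variable {N q a b : ℕ}

lemma inclusionProb_pos (haq : a ≤ q) (hqN : q ≤ N) : 0 < inclusionProb N q a :=
  div_pos (mod_cast Nat.choose_pos haq) (mod_cast Nat.choose_pos (haq.trans hqN))

lemma inclusionProb_eq_prod (haq : a ≤ q) (hqN : q ≤ N) :
    inclusionProb N q a = ∏ i ∈ range a, ((q : ℝ) - i) / (N - i) := by
  have cast_descFactorial {n : ℕ} (han : a ≤ n) :
      (n.descFactorial a : ℝ) = ∏ i ∈ range a, ((n : ℝ) - i) := by
    rw [Nat.descFactorial_eq_prod_range, Nat.cast_prod]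
    exact prod_congr rfl fun i hi => Nat.cast_sub (by grind)
  rw [prod_div_distrib, ← cast_descFactorial haq, ← cast_descFactorial (haq.trans hqN),
    Nat.descFactorial_eq_factorial_mul_choose, Nat.descFactorial_eq_factorial_mul_choose,
    Nat.cast_mul, Nat.cast_mul, mul_div_mul_left _ _ (mod_cast a.factorial_ne_zero),
    inclusionProb]

lemma inclusionProb_add (habq : a + b ≤ q) (hqN : q ≤ N) :
    inclusionProb N q (a + b) = inclusionProb N q a * inclusionProb (N - a) (q - a) b := by
  rw [inclusionProb_eq_prod habq hqN, inclusionProb_eq_prod (by omega) hqN,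
    inclusionProb_eq_prod (by omega) (by omega), prod_range_add, Nat.cast_sub (by omega),
    Nat.cast_sub (by omega)]
  simp only [Nat.cast_add, sub_sub]

lemma inclusionProb_sub_sub_le (habq : a + b ≤ q) (hqN : q ≤ N) :
    inclusionProb (N - a) (q - a) b ≤ inclusionProb N q b := by
  rw [inclusionProb_eq_prod (by omega) (by omega), inclusionProb_eq_prod (by omega) hqN,
    Nat.cast_sub (by omega), Nat.cast_sub (by omega)]
  have hq : (a : ℝ) + b ≤ q := mod_cast habq
  have hN : (q : ℝ) ≤ N := mod_cast hqN
  refine prod_le_prod (fun i hi => ?_) fun i hi => ?_ <;>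
    have hi : (i : ℝ) + 1 ≤ b := mod_cast mem_range.1 hi
  · exact div_nonneg (by linarith) (by linarith)
  · rw [div_le_div_iff₀ (by linarith) (by linarith)]
    nlinarith [mul_nonneg (Nat.cast_nonneg (α := ℝ) a) (sub_nonneg.2 hN)]

lemma inclusionProb_add_le_mul (habq : a + b ≤ q) (hqN : q ≤ N) :
    inclusionProb N q (a + b) ≤ inclusionProb N q a * inclusionProb N q b := by
  rw [inclusionProb_add habq hqN]
  exact mul_le_mul_of_nonneg_left (inclusionProb_sub_sub_le habq hqN)
    (inclusionProb_pos (by omega) hqN).le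

lemma inclusionProb_le_pow (haq : a ≤ q) (hqN : q ≤ N) :
    inclusionProb N q a ≤ ((q : ℝ) / N) ^ a := by
  have hN : (q : ℝ) ≤ N := mod_cast hqN
  rw [inclusionProb_eq_prod haq hqN, ← card_range a, ← prod_const, card_range]
  refine prod_le_prod (fun i hi => ?_) fun i hi => ?_ <;>
    have hi : (i : ℝ) + 1 ≤ q := mod_cast (mem_range.1 hi).trans_le haq
  · exact div_nonneg (by linarith) (by linarith)
  · rw [div_le_div_iff₀ (by linarith) (by linarith)]
    nlinarith

lemma one_le_pow_mul_inclusionProb (hab : 2 * (a + b) ≤ q) (hqN : q ≤ N) :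
    1 ≤ (2 * N / q : ℝ) ^ b * inclusionProb (N - a) (q - a) b := by
  have hq : 2 * ((a : ℝ) + b) ≤ q := mod_cast hab
  have hN : (q : ℝ) ≤ N := mod_cast hqN
  rw [inclusionProb_eq_prod (by omega) (by omega), Nat.cast_sub (by omega),
    Nat.cast_sub (by omega), ← card_range b, ← prod_const, card_range, ← prod_mul_distrib]
  refine one_le_prod fun i hi => ?_
  have hi : (i : ℝ) + 1 ≤ b := mod_cast mem_range.1 hi
  have := Nat.cast_nonneg (α := ℝ) a
  rw [div_mul_div_comm, one_le_div (mul_pos (by linarith) (by linarith))]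
  nlinarith

lemma inclusionProb_le_pow_mul (hab : 2 * (a + b) ≤ q) (hqN : q ≤ N) :
    inclusionProb N q a ≤ (2 * N / q : ℝ) ^ b * inclusionProb N q (a + b) := by
  rw [inclusionProb_add (by omega) hqN, mul_left_comm]
  exact le_mul_of_one_le_right (inclusionProb_pos (by omega) hqN).le
    (one_le_pow_mul_inclusionProb hab hqN)

lemma choose_sub_sub_eq_choose_mul_inclusionProb (haq : a ≤ q) (hqN : q ≤ N) :
    ((N - a).choose (q - a) : ℝ) = N.choose q * inclusionProb N q a := by
  rw [inclusionProb, ← mul_div_assoc, eq_div_iff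
    (mod_cast (Nat.choose_pos (haq.trans hqN)).ne'), mul_comm]
  exact_mod_cast (Nat.choose_mul haq).symm

lemma inclusionProb_card_union_le {α : Type*} [DecidableEq α] {A B : Finset α}
    (hABq : #A + #B ≤ q) (hBq : 2 * #B ≤ q) (hqN : q ≤ N) :
    inclusionProb N q #(A ∪ B) ≤
      inclusionProb N q #A * inclusionProb N q #B * (2 * N / q : ℝ) ^ #(A ∩ B) := by
  have hunion : #(A ∪ B) = #A + #(B \ A) := by rw [union_comm, ← card_sdiff_add_card, add_comm]
  have hB : #(B \ A) + #(A ∩ B) = #B := by rw [inter_comm, card_sdiff_add_card_inter]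
  calc inclusionProb N q #(A ∪ B)
      ≤ inclusionProb N q #A * inclusionProb N q #(B \ A) := by
        rw [hunion]; exact inclusionProb_add_le_mul (by omega) hqN
    _ ≤ inclusionProb N q #A * ((2 * N / q : ℝ) ^ #(A ∩ B) * inclusionProb N q #B) := by
        refine mul_le_mul_of_nonneg_left ?_ (inclusionProb_pos (by omega) hqN).le
        simpa only [hB] using inclusionProb_le_pow_mul (a := #(B \ A)) (b := #(A ∩ B))
          (by omega) hqN
    _ = _ := by ring

end InclusionProbability

section SliceDensity

lemma expect_smul_eq_expect {G X : Type*} [Group G] [Fintype G] [Fintype X] [MulAction G X]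
    [MulAction.IsPretransitive G X] (f : X → ℝ) (x : X) :
    𝔼 g : G, f (g • x) = 𝔼 y, f y := by
  have indep (y : X) : 𝔼 g : G, f (g • y) = 𝔼 g : G, f (g • x) := by
    obtain ⟨h, rfl⟩ := MulAction.exists_smul_eq G x y
    exact Fintype.expect_equiv (Equiv.mulRight h) _ _ fun g => by
      rw [Equiv.coe_mulRight, mul_smul]
  have : Nonempty X := ⟨x⟩
  calc 𝔼 g : G, f (g • x) = 𝔼 y : X, 𝔼 g : G, f (g • y) := by
        simp only [indep, Fintype.expect_const]
    _ = 𝔼 g : G, 𝔼 y : X, f (g • y) := expect_comm ..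
    _ = 𝔼 _g : G, 𝔼 y, f y :=
        expect_congr rfl fun g _ => Fintype.expect_equiv (MulAction.toPerm g) _ _ fun _ => rfl
    _ = 𝔼 y, f y := Fintype.expect_const _

variable {α : Type*} [Fintype α] {𝒜 : Finset (Finset α)} {a b q : ℕ}

lemma powersetCard_univ_nonempty (hq : q ≤ Fintype.card α) :
    (univ.powersetCard q : Finset (Finset α)).Nonempty :=
  powersetCard_nonempty.2 (by rwa [card_univ])

variable [DecidableEq α]

/-- The probability that a uniformly random `q`-subset of `α` belongs to `𝒜`; it is `0` for
`q > |α|`, where there is no such subset. -/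
noncomputable def sliceDensity (𝒜 : Finset (Finset α)) (q : ℕ) : ℝ :=
  𝔼 T ∈ univ.powersetCard q, if T ∈ 𝒜 then 1 else 0

lemma sliceDensity_nonneg : 0 ≤ sliceDensity 𝒜 q :=
  expect_nonneg fun _ _ => by split_ifs <;> norm_num

lemma sliceDensity_le_one : sliceDensity 𝒜 q ≤ 1 := by
  obtain hq | hq := le_or_gt q (Fintype.card α)
  · exact expect_le (powersetCard_univ_nonempty hq) fun _ _ => by split_ifs <;> norm_num
  · rw [sliceDensity, powersetCard_eq_empty.2 (by rwa [card_univ]), expect_empty]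
    exact zero_le_one

lemma sliceDensity_compl (hq : q ≤ Fintype.card α) :
    sliceDensity 𝒜ᶜ q = 1 - sliceDensity 𝒜 q := by
  have hsum : sliceDensity 𝒜ᶜ q + sliceDensity 𝒜 q =
      𝔼 _T ∈ (univ.powersetCard q : Finset (Finset α)), (1 : ℝ) := by
    rw [sliceDensity, sliceDensity, ← expect_add_distrib]
    exact expect_congr rfl fun T _ => by by_cases hT : T ∈ 𝒜 <;> simp [hT]
  rw [eq_sub_iff_add_eq, hsum, expect_const (powersetCard_univ_nonempty hq)]

lemma choose_mul_sliceDensity (𝒜 : Finset (Finset α)) (q : ℕ) :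
    (Fintype.card α).choose q * sliceDensity 𝒜 q = #{T ∈ univ.powersetCard q | T ∈ 𝒜} := by
  rw [sliceDensity, ← card_univ, ← card_powersetCard, card_mul_expect, sum_boole]

lemma sliceDensity_superset {A : Finset α} (hAq : #A ≤ q) (hq : q ≤ Fintype.card α) :
    sliceDensity {T | A ⊆ T} q = inclusionProb (Fintype.card α) q #A := by
  have hpos : (0 : ℝ) < (Fintype.card α).choose q := mod_cast Nat.choose_pos hq
  refine mul_left_cancel₀ hpos.ne' ?_
  simp only [choose_mul_sliceDensity, mem_filter_univ]
  rw [card_filter_powersetCard_subset A univ q (subset_univ A) hAq, card_univ,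
    choose_sub_sub_eq_choose_mul_inclusionProb hAq hq]

lemma sliceDensity_card_eq_expect_smul (𝒜 : Finset (Finset α)) (S : Finset α) :
    sliceDensity 𝒜 #S = 𝔼 σ : Equiv.Perm α, if σ • S ∈ 𝒜 then 1 else 0 := by
  classical
  have := Set.powersetCard.isPretransitive (α := α) (n := #S)
  have h := expect_smul_eq_expect (G := Equiv.Perm α)
    (fun T : Set.powersetCard α #S => if (T : Finset α) ∈ 𝒜 then (1 : ℝ) else 0) ⟨S, rfl⟩
  simp only [Set.powersetCard.coe_smul] at h
  rw [h, sliceDensity]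
  symm
  refine expect_nbij (fun T : Set.powersetCard α #S => (T : Finset α)) ?_ ?_ ?_ ?_
  · exact fun T _ => mem_powersetCard_univ.2 T.2
  · exact fun _ _ => rfl
  · exact Subtype.val_injective.injOn
  · exact fun T hT => ⟨⟨T, mem_powersetCard_univ.1 hT⟩, mem_univ _, rfl⟩

lemma sliceDensity_anti (h𝒜 : IsLowerSet (𝒜 : Set (Finset α))) (hab : a ≤ b)
    (hb : b ≤ Fintype.card α) : sliceDensity 𝒜 b ≤ sliceDensity 𝒜 a := by
  obtain ⟨B, -, rfl⟩ := exists_subset_card_eq (s := (univ : Finset α)) (n := b)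
    (by rwa [card_univ])
  obtain ⟨A, hAB, rfl⟩ := exists_subset_card_eq hab
  simp only [sliceDensity_card_eq_expect_smul]
  refine expect_le_expect fun σ _ => ?_
  have : σ • B ∈ 𝒜 → σ • A ∈ 𝒜 := @h𝒜 _ _ (smul_finset_subset_smul_finset_iff.2 hAB)
  split_ifs <;> simp_all

-- For independent uniform permutations `σ` and `τ`, the blocks `σ • A` and `σ • τ • B` are
-- independent and uniform; overlapping can only make their union smaller.
lemma sliceDensity_add_le_mul (h𝒜 : IsLowerSet (𝒜 : Set (Finset α)))
    (hab : a + b ≤ Fintype.card α) :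
    sliceDensity 𝒜 (a + b) ≤ sliceDensity 𝒜 a * sliceDensity 𝒜 b := by
  obtain ⟨A, -, rfl⟩ := exists_subset_card_eq (s := (univ : Finset α)) (n := a)
    (by rw [card_univ]; omega)
  obtain ⟨B, -, rfl⟩ := exists_subset_card_eq (s := (univ : Finset α)) (n := b)
    (by rw [card_univ]; omega)
  let ind (S : Finset α) : ℝ := if S ∈ 𝒜 then 1 else 0
  have ind_union_le (S T : Finset α) : ind (S ∪ T) ≤ ind S * ind T := by
    have hS : S ∪ T ∈ 𝒜 → S ∈ 𝒜 := @h𝒜 _ _ subset_union_left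
    have hT : S ∪ T ∈ 𝒜 → T ∈ 𝒜 := @h𝒜 _ _ subset_union_right
    simp only [ind]
    split_ifs <;> simp_all
  have card_union_smul_le (τ : Equiv.Perm α) : #(A ∪ τ • B) ≤ #A + #B :=
    (card_union_le _ _).trans_eq (by rw [card_smul_finset])
  calc sliceDensity 𝒜 (#A + #B)
      = 𝔼 _τ : Equiv.Perm α, sliceDensity 𝒜 (#A + #B) := (Fintype.expect_const _).symm
    _ ≤ 𝔼 τ : Equiv.Perm α, sliceDensity 𝒜 #(A ∪ τ • B) :=
        expect_le_expect fun τ _ => sliceDensity_anti h𝒜 (card_union_smul_le τ) hab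
    _ = 𝔼 σ : Equiv.Perm α, 𝔼 τ : Equiv.Perm α, ind (σ • (A ∪ τ • B)) := by
        simp only [sliceDensity_card_eq_expect_smul, ind]; exact expect_comm ..
    _ ≤ 𝔼 σ : Equiv.Perm α, 𝔼 τ : Equiv.Perm α, ind (σ • A) * ind ((σ * τ) • B) :=
        expect_le_expect fun σ _ => expect_le_expect fun τ _ => by
          simpa only [smul_finset_union, mul_smul] using ind_union_le (σ • A) (σ • τ • B)
    _ = 𝔼 σ : Equiv.Perm α, ind (σ • A) * 𝔼 τ : Equiv.Perm α, ind (τ • B) :=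
        expect_congr rfl fun σ _ => by
          rw [← mul_expect]
          exact congrArg _ (Fintype.expect_equiv (Equiv.mulLeft σ) _ _ fun _ => rfl)
    _ = sliceDensity 𝒜 #A * sliceDensity 𝒜 #B := by
        rw [← expect_mul, sliceDensity_card_eq_expect_smul, sliceDensity_card_eq_expect_smul]

lemma sliceDensity_mul_le_pow (h𝒜 : IsLowerSet (𝒜 : Set (Finset α))) {k : ℕ}
    (hkq : k * q ≤ Fintype.card α) : sliceDensity 𝒜 (k * q) ≤ sliceDensity 𝒜 q ^ k := by
  induction k with
  | zero => simpa using sliceDensity_le_one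
  | succ k ih =>
    rw [add_one_mul] at hkq ⊢
    rw [pow_succ]
    exact (sliceDensity_add_le_mul h𝒜 hkq).trans <|
      mul_le_mul_of_nonneg_right (ih (by omega)) sliceDensity_nonneg

end SliceDensity

section Spread

variable {α ι : Type*} [DecidableEq α] {I : Finset ι} {f : ι → Finset α} {β : ℝ} {m q : ℕ}

/-- The family `(f i)_{i ∈ I}` is `β`-spread: a uniformly random member contains any given set `h`
with probability at most `β ^ |h|`. -/
def IsSpread (I : Finset ι) (f : ι → Finset α) (β : ℝ) : Prop :=
  ∀ h : Finset α, 𝔼 i ∈ I, (if h ⊆ f i then (1 : ℝ) else 0) ≤ β ^ #h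

lemma IsSpread.expect_pow_card_inter_le (hf : IsSpread I f β) {x : ℝ} (hx : 0 ≤ x)
    (A : Finset α) : 𝔼 i ∈ I, x ^ #(A ∩ f i) ≤ (x * β + 1) ^ #A := by
  have pow_card_inter_le (B : Finset α) :
      x ^ #(A ∩ B) ≤ ∑ h ∈ A.powerset, x ^ #h * if h ⊆ B then 1 else 0 := by
    have := single_le_sum (f := fun h => x ^ #h * if h ⊆ B then 1 else 0)
      (fun h _ => by positivity) (mem_powerset.2 (inter_subset_left : A ∩ B ⊆ A))
    simpa using this
  calc 𝔼 i ∈ I, x ^ #(A ∩ f i)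
      ≤ 𝔼 i ∈ I, ∑ h ∈ A.powerset, x ^ #h * if h ⊆ f i then 1 else 0 :=
        expect_le_expect fun i _ => pow_card_inter_le (f i)
    _ = ∑ h ∈ A.powerset, x ^ #h * 𝔼 i ∈ I, if h ⊆ f i then 1 else 0 := by
        simp only [expect_sum_comm, mul_expect]
    _ ≤ ∑ h ∈ A.powerset, x ^ #h * β ^ #h :=
        sum_le_sum fun h _ => mul_le_mul_of_nonneg_left (hf h) (by positivity)
    _ = (x * β + 1) ^ #A := by
        simp only [← sum_pow_mul_eq_add_pow, one_pow, mul_one, mul_pow]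

variable [Fintype α]

/-- The sets containing some member of the family `(f i)_{i ∈ I}`. -/
def covered (I : Finset ι) (f : ι → Finset α) : Finset (Finset α) := {T | ∃ i ∈ I, f i ⊆ T}

lemma mem_covered {T : Finset α} : T ∈ covered I f ↔ ∃ i ∈ I, f i ⊆ T := mem_filter_univ T

lemma isLowerSet_compl_covered :
    IsLowerSet (((covered I f)ᶜ : Finset (Finset α)) : Set (Finset α)) := by
  intro S T hTS hS
  simp only [mem_coe, mem_compl, mem_covered] at hS ⊢
  rintro ⟨i, hi, hiT⟩
  exact hS ⟨i, hi, hiT.trans hTS⟩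

lemma expect_subset_eq_inclusionProb {A : Finset α} (hAq : #A ≤ q) (hq : q ≤ Fintype.card α) :
    𝔼 T ∈ univ.powersetCard q, (if A ⊆ T then 1 else 0) =
      inclusionProb (Fintype.card α) q #A := by
  simpa only [sliceDensity, mem_filter_univ] using sliceDensity_superset hAq hq

lemma expect_expect_subset (hI : I.Nonempty) (hcard : ∀ i ∈ I, #(f i) = m) (hmq : m ≤ q)
    (hq : q ≤ Fintype.card α) :
    𝔼 T ∈ univ.powersetCard q, 𝔼 i ∈ I, (if f i ⊆ T then (1 : ℝ) else 0) =
      inclusionProb (Fintype.card α) q m := by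
  rw [expect_comm, ← expect_const hI (inclusionProb _ q m)]
  refine expect_congr rfl fun i hi => ?_
  rw [← hcard i hi]
  exact expect_subset_eq_inclusionProb (by rwa [hcard i hi]) hq

lemma IsSpread.expect_expect_subset_sq_le (hf : IsSpread I f β) (hI : I.Nonempty)
    (hcard : ∀ i ∈ I, #(f i) = m) (hmq : 2 * m ≤ q) (hq : q ≤ Fintype.card α) :
    𝔼 T ∈ univ.powersetCard q, (𝔼 i ∈ I, if f i ⊆ T then (1 : ℝ) else 0) ^ 2 ≤
      inclusionProb (Fintype.card α) q m ^ 2 * (2 * Fintype.card α / q * β + 1) ^ m := by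
  set N := Fintype.card α
  have card_union_le_two_mul {i j : ι} (hi : i ∈ I) (hj : j ∈ I) : #(f i ∪ f j) ≤ q :=
    (card_union_le _ _).trans (by rw [hcard i hi, hcard j hj]; omega)
  calc 𝔼 T ∈ univ.powersetCard q, (𝔼 i ∈ I, if f i ⊆ T then (1 : ℝ) else 0) ^ 2
      = 𝔼 i ∈ I, 𝔼 j ∈ I, 𝔼 T ∈ univ.powersetCard q, if f i ∪ f j ⊆ T then (1 : ℝ) else 0 := by
        simp only [sq, expect_mul_expect, ite_zero_mul_ite_zero, mul_one, union_subset_iff]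
        rw [expect_comm]
        exact expect_congr rfl fun i _ => expect_comm ..
    _ = 𝔼 i ∈ I, 𝔼 j ∈ I, inclusionProb N q #(f i ∪ f j) :=
        expect_congr rfl fun i hi => expect_congr rfl fun j hj =>
          expect_subset_eq_inclusionProb (card_union_le_two_mul hi hj) hq
    _ ≤ 𝔼 i ∈ I, 𝔼 j ∈ I, inclusionProb N q m ^ 2 * (2 * N / q : ℝ) ^ #(f i ∩ f j) :=
        expect_le_expect fun i hi => expect_le_expect fun j hj => by
          have := inclusionProb_card_union_le (A := f i) (B := f j) (q := q) (N := N)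
            (by rw [hcard i hi, hcard j hj]; omega) (by rwa [hcard j hj]) hq
          rwa [hcard i hi, hcard j hj, ← sq] at this
    _ = inclusionProb N q m ^ 2 * 𝔼 i ∈ I, 𝔼 j ∈ I, (2 * N / q : ℝ) ^ #(f i ∩ f j) := by
        simp only [mul_expect]
    _ ≤ inclusionProb N q m ^ 2 * (2 * N / q * β + 1) ^ m := by
        refine mul_le_mul_of_nonneg_left (expect_le hI fun i hi => ?_) (sq_nonneg _)
        rw [← hcard i hi]
        exact hf.expect_pow_card_inter_le (by positivity) (f i)

-- Cauchy–Schwarz for `X = 1_{X > 0} X`, where `X T` is the proportion of members inside `T`.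
lemma IsSpread.one_le_sliceDensity_covered_mul (hf : IsSpread I f β) (hI : I.Nonempty)
    (hcard : ∀ i ∈ I, #(f i) = m) (hmq : 2 * m ≤ q) (hq : q ≤ Fintype.card α) :
    1 ≤ sliceDensity (covered I f) q * (2 * Fintype.card α / q * β + 1) ^ m := by
  let X (T : Finset α) : ℝ := 𝔼 i ∈ I, if f i ⊆ T then 1 else 0
  let ind (T : Finset α) : ℝ := if T ∈ covered I f then 1 else 0
  have ind_mul_X (T : Finset α) : ind T * X T = X T := by
    by_cases hT : T ∈ covered I f
    · simp only [ind, if_pos hT, one_mul]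
    · have : X T = 0 := expect_eq_zero fun i hi => if_neg fun hiT =>
        hT (mem_covered.2 ⟨i, hi, hiT⟩)
      rw [this, mul_zero]
  have ind_sq (T : Finset α) : ind T ^ 2 = ind T := by simp only [ind, ite_pow]; norm_num
  have cauchy_schwarz := expect_mul_sq_le_sq_mul_sq (univ.powersetCard q) ind X
  simp only [ind_mul_X, ind_sq] at cauchy_schwarz
  rw [expect_expect_subset hI hcard (by omega) hq] at cauchy_schwarz
  have hpos : 0 < inclusionProb (Fintype.card α) q m ^ 2 :=
    pow_pos (inclusionProb_pos (by omega) hq) 2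
  refine le_of_mul_le_mul_left ?_ hpos
  calc inclusionProb (Fintype.card α) q m ^ 2 * 1
      ≤ sliceDensity (covered I f) q * 𝔼 T ∈ univ.powersetCard q, X T ^ 2 := by
        rwa [mul_one]
    _ ≤ sliceDensity (covered I f) q * (inclusionProb (Fintype.card α) q m ^ 2 *
          (2 * Fintype.card α / q * β + 1) ^ m) :=
        mul_le_mul_of_nonneg_left (hf.expect_expect_subset_sq_le hI hcard hmq hq)
          sliceDensity_nonneg
    _ = _ := by ring

lemma IsSpread.exp_neg_le_sliceDensity_covered (hf : IsSpread I f β) (hI : I.Nonempty)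
    (hβ : 0 ≤ β) (hcard : ∀ i ∈ I, #(f i) = m) (hmq : 2 * m ≤ q) (hq : q ≤ Fintype.card α) :
    Real.exp (-(m * (2 * Fintype.card α / q * β))) ≤ sliceDensity (covered I f) q := by
  rw [Real.exp_neg, inv_le_iff_one_le_mul₀ (Real.exp_pos _), Real.exp_nat_mul]
  refine (hf.one_le_sliceDensity_covered_mul hI hcard hmq hq).trans ?_
  gcongr
  · exact sliceDensity_nonneg
  · exact Real.add_one_le_exp _

lemma IsSpread.sliceDensity_compl_covered_le (hf : IsSpread I f β) (hI : I.Nonempty)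
    (hβ : 0 ≤ β) (hcard : ∀ i ∈ I, #(f i) = m) (hmq : 2 * m ≤ q) (hq : q ≤ Fintype.card α)
    (hδ : m * (2 * Fintype.card α / q * β) ≤ 1 / 4) :
    sliceDensity (covered I f)ᶜ q ≤ Real.exp (-1) := by
  have hcovered : 1 - 1 / 4 ≤ sliceDensity (covered I f) q := calc
    (1 : ℝ) - 1 / 4 ≤ Real.exp (-(1 / 4)) := Real.one_sub_le_exp_neg _
    _ ≤ Real.exp (-(m * (2 * Fintype.card α / q * β))) := by gcongr
    _ ≤ _ := hf.exp_neg_le_sliceDensity_covered hI hβ hcard hmq hq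
  have hexp : 1 / 4 ≤ Real.exp (-1) := by linarith [Real.exp_neg_one_gt_d9]
  rw [sliceDensity_compl hq]
  linarith

lemma IsSpread.one_sub_exp_neg_le_sliceDensity_covered (hf : IsSpread I f β) (hI : I.Nonempty)
    (hβ : 0 ≤ β) (hcard : ∀ i ∈ I, #(f i) = m) (hmq : 2 * m ≤ q) (hq : q ≤ Fintype.card α)
    (hδ : m * (2 * Fintype.card α / q * β) ≤ 1 / 4) {k l : ℕ} (hkl : k * q ≤ l)
    (hl : l ≤ Fintype.card α) :
    1 - Real.exp (-k) ≤ sliceDensity (covered I f) l := by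
  rw [sub_le_comm, ← sliceDensity_compl hl]
  calc sliceDensity (covered I f)ᶜ l
      ≤ sliceDensity (covered I f)ᶜ (k * q) := sliceDensity_anti isLowerSet_compl_covered hkl hl
    _ ≤ sliceDensity (covered I f)ᶜ q ^ k :=
        sliceDensity_mul_le_pow isLowerSet_compl_covered (hkl.trans hl)
    _ ≤ Real.exp (-1) ^ k := pow_le_pow_left₀ sliceDensity_nonneg
        (hf.sliceDensity_compl_covered_le hI hβ hcard hmq hq hδ) k
    _ = Real.exp (-k) := by rw [← Real.exp_nat_mul, mul_neg_one]

end Spread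

section Link

variable {α : Type*} [DecidableEq α] {V g : Finset α} {𝒰 : Finset (Finset α)} {m l : ℕ} {r : ℝ}

/-- The proportion of the members of `𝒰` containing `g` among all `m`-subsets of `V` containing `g`.
For a family `𝒰` of `m`-sets it is `0` when `|g| > m`. -/
noncomputable def linkDensity (V : Finset α) (𝒰 : Finset (Finset α)) (m : ℕ) (g : Finset α) : ℝ :=
  #{s ∈ 𝒰 | g ⊆ s} / (#V - #g).choose (m - #g)

lemma linkDensity_empty : linkDensity V 𝒰 m ∅ = #𝒰 / (#V).choose m := by
  simp [linkDensity]

lemma filter_subset_eq_empty (h𝒰 : 𝒰 ⊆ V.powersetCard m) (hmg : m < #g) :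
    {s ∈ 𝒰 | g ⊆ s} = ∅ :=
  filter_eq_empty_iff.2 fun _ hs hgs =>
    hmg.not_ge <| (mem_powersetCard.1 (h𝒰 hs)).2 ▸ card_le_card hgs

lemma linkDensity_le_one (h𝒰 : 𝒰 ⊆ V.powersetCard m) (hg : g ⊆ V) : linkDensity V 𝒰 m g ≤ 1 := by
  refine div_le_one_of_le₀ (mod_cast ?_) (Nat.cast_nonneg _)
  obtain hgm | hmg := le_or_gt #g m
  · rw [← card_filter_powersetCard_subset g V m hg hgm]
    exact card_le_card (filter_subset_filter _ h𝒰)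
  · simp [filter_subset_eq_empty h𝒰 hmg]

lemma exists_linkDensity_max (V : Finset α) (𝒰 : Finset (Finset α)) (m : ℕ) (hr : 0 < r) :
    ∃ g ⊆ V, r ^ #g * linkDensity V 𝒰 m ∅ ≤ linkDensity V 𝒰 m g ∧
      ∀ h ⊆ V \ g, linkDensity V 𝒰 m (g ∪ h) ≤ r ^ #h * linkDensity V 𝒰 m g := by
  obtain ⟨g, hg, hmax⟩ := exists_max_image V.powerset
    (fun g => linkDensity V 𝒰 m g / r ^ #g) (powerset_nonempty V)
  rw [mem_powerset] at hg
  refine ⟨g, hg, ?_, fun h hh => ?_⟩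
  · have := hmax ∅ (empty_mem_powerset V)
    rw [card_empty, pow_zero, div_one, le_div_iff₀ (by positivity)] at this
    rwa [mul_comm]
  · have := hmax (g ∪ h) (mem_powerset.2 (union_subset hg (hh.trans sdiff_subset)))
    rw [card_union_of_disjoint (disjoint_sdiff.mono_right hh),
      div_le_div_iff₀ (by positivity) (by positivity), pow_add] at this
    refine le_of_mul_le_mul_right ?_ (pow_pos hr #g)
    linarith

lemma card_filter_union_subset_le {h : Finset α} (h𝒰 : 𝒰 ⊆ V.powersetCard m) (hgm : #g ≤ m)
    (hmV : m ≤ #V) (hr : 0 ≤ r) (hgh : Disjoint g h)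
    (hmax : linkDensity V 𝒰 m (g ∪ h) ≤ r ^ #h * linkDensity V 𝒰 m g) :
    (#{s ∈ 𝒰 | g ∪ h ⊆ s} : ℝ) ≤
      #{s ∈ 𝒰 | g ⊆ s} * (((m - #g : ℕ) : ℝ) * r / (#V - #g : ℕ)) ^ #h := by
  obtain hm | hm := lt_or_ge m #(g ∪ h)
  · rw [filter_subset_eq_empty h𝒰 hm, card_empty, Nat.cast_zero]
    positivity
  rw [card_union_of_disjoint hgh] at hm
  have hchoose := choose_sub_sub_eq_choose_mul_inclusionProb (N := #V - #g) (q := m - #g)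
    (a := #h) (by omega) (by omega)
  have hprob := inclusionProb_le_pow (N := #V - #g) (q := m - #g) (a := #h) (by omega) (by omega)
  have hC : (0 : ℝ) < (#V - #g).choose (m - #g) := mod_cast Nat.choose_pos (by omega)
  have hP := inclusionProb_pos (N := #V - #g) (q := m - #g) (a := #h) (by omega) (by omega)
  rw [linkDensity, linkDensity, card_union_of_disjoint hgh, ← Nat.sub_sub, ← Nat.sub_sub,
    hchoose, div_le_iff₀ (mul_pos hC hP)] at hmax
  calc (#{s ∈ 𝒰 | g ∪ h ⊆ s} : ℝ)
      ≤ r ^ #h * (#{s ∈ 𝒰 | g ⊆ s} / (#V - #g).choose (m - #g)) *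
          ((#V - #g).choose (m - #g) * inclusionProb (#V - #g) (m - #g) #h) := hmax
    _ = #{s ∈ 𝒰 | g ⊆ s} * (r ^ #h * inclusionProb (#V - #g) (m - #g) #h) := by
        field_simp
    _ ≤ #{s ∈ 𝒰 | g ⊆ s} * (r ^ #h * (((m - #g : ℕ) : ℝ) / (#V - #g : ℕ)) ^ #h) := by gcongr
    _ = _ := by rw [← mul_pow, ← mul_div_assoc, mul_comm r]

lemma subset_subtype_iff {W : Finset α} {h : Finset W} {s : Finset α} :
    h ⊆ s.subtype (· ∈ W) ↔ h.map (.subtype _) ⊆ s := by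
  simp [subset_iff]

lemma card_subtype_sdiff {s : Finset α} (hgs : g ⊆ s) (hsV : s ⊆ V) :
    #(s.subtype (· ∈ V \ g)) = #s - #g := by
  rw [card_subtype, ← card_sdiff_of_subset hgs]
  congr 1
  ext x
  have := @hsV x
  simp only [mem_filter, mem_sdiff]
  tauto

lemma isSpread_subtype_sdiff
    (hmax : ∀ h ⊆ V \ g, linkDensity V 𝒰 m (g ∪ h) ≤ r ^ #h * linkDensity V 𝒰 m g)
    (h𝒰 : 𝒰 ⊆ V.powersetCard m) (hgm : #g ≤ m) (hmV : m ≤ #V) (hr : 0 ≤ r) :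
    IsSpread {s ∈ 𝒰 | g ⊆ s} (Finset.subtype (· ∈ V \ g))
      (((m - #g : ℕ) : ℝ) * r / (#V - #g : ℕ)) := by
  intro h
  have hh : h.map (.subtype _) ⊆ V \ g := fun _ hx => property_of_mem_map_subtype h hx
  have hcount := card_filter_union_subset_le h𝒰 hgm hmV hr (disjoint_sdiff.mono_right hh)
    (hmax _ hh)
  simp only [subset_subtype_iff, expect_eq_sum_div_card, sum_boole, filter_filter,
    ← union_subset_iff]
  rw [card_map, mul_comm] at hcount
  exact div_le_of_le_mul₀ (by positivity) (by positivity) hcount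

lemma exists_isSpread_link (h𝒰 : 𝒰 ⊆ V.powersetCard m) (hne : 𝒰.Nonempty) (hr : 0 < r) :
    ∃ g ⊆ V, #g ≤ m ∧ {s ∈ 𝒰 | g ⊆ s}.Nonempty ∧ r ^ #g * #𝒰 ≤ (#V).choose m ∧
      IsSpread {s ∈ 𝒰 | g ⊆ s} (Finset.subtype (· ∈ V \ g))
        (((m - #g : ℕ) : ℝ) * r / (#V - #g : ℕ)) := by
  have hmV : m ≤ #V := powersetCard_nonempty.1 (hne.mono h𝒰)
  have hC : (0 : ℝ) < (#V).choose m := mod_cast Nat.choose_pos hmV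
  obtain ⟨g, hgV, hdensity, hmax⟩ := exists_linkDensity_max V 𝒰 m hr
  rw [linkDensity_empty] at hdensity
  have hlink : {s ∈ 𝒰 | g ⊆ s}.Nonempty := by
    by_contra hempty
    rw [not_nonempty_iff_eq_empty] at hempty
    have hzero : linkDensity V 𝒰 m g = 0 := by simp [linkDensity, hempty]
    have : (0 : ℝ) < #𝒰 := mod_cast hne.card_pos
    exact (hdensity.trans_lt' (by positivity)).ne' hzero
  have hgm : #g ≤ m := by
    by_contra! hmg
    exact hlink.ne_empty (filter_subset_eq_empty h𝒰 hmg)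
  refine ⟨g, hgV, hgm, hlink, ?_, isSpread_subtype_sdiff hmax h𝒰 hgm hmV hr.le⟩
  have := hdensity.trans (linkDensity_le_one h𝒰 hgV)
  rwa [← mul_div_assoc, div_le_one hC] at this

lemma choose_mul_sliceDensity_covered_le (h𝒰 : ∀ s ∈ 𝒰, s ⊆ V) (hgV : g ⊆ V) (hgl : #g ≤ l) :
    (#V - #g).choose (l - #g) *
        sliceDensity (covered 𝒰 (Finset.subtype (· ∈ V \ g))) (l - #g) ≤
      #{t ∈ V.powersetCard l | ∃ s ∈ 𝒰, s ⊆ t} := by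
  have hcard : Fintype.card ↥(V \ g) = #V - #g := by
    rw [Fintype.card_coe, card_sdiff_of_subset hgV]
  have map_subset (T : Finset ↥(V \ g)) : T.map (.subtype _) ⊆ V \ g :=
    fun _ hx => property_of_mem_map_subtype T hx
  have disjoint_map (T : Finset ↥(V \ g)) : Disjoint g (T.map (.subtype _)) :=
    disjoint_sdiff.mono_right (map_subset T)
  rw [← hcard, choose_mul_sliceDensity, Nat.cast_le]
  refine card_le_card_of_injOn (fun T => g ∪ T.map (.subtype _)) ?_ ?_
  · intro T hT
    simp only [mem_coe, mem_filter, mem_powersetCard_univ, mem_covered] at hT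
    obtain ⟨hTl, s, hs, hsT⟩ := hT
    have hunion : g ∪ T.map (.subtype _) ⊆ V :=
      union_subset hgV ((map_subset T).trans sdiff_subset)
    refine mem_filter.2 ⟨mem_powersetCard.2 ⟨hunion, ?_⟩, s, hs, fun x hx => ?_⟩
    · rw [card_union_of_disjoint (disjoint_map T), card_map, hTl]
      omega
    · by_cases hxg : x ∈ g
      · exact mem_union_left _ hxg
      · have hxV : x ∈ V \ g := mem_sdiff.2 ⟨h𝒰 s hs hx, hxg⟩
        exact mem_union_right _ (mem_map_of_mem _ (@hsT ⟨x, hxV⟩ (mem_subtype.2 hx)))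
  · intro S _ T _ (hST : g ∪ S.map _ = g ∪ T.map _)
    rw [← map_inj (f := .subtype _), ← union_sdiff_cancel_left (disjoint_map S), hST,
      union_sdiff_cancel_left (disjoint_map T)]

lemma IsSpread.choose_mul_one_sub_exp_neg_le_card_extension {β : ℝ} {k q : ℕ}
    (hspread : IsSpread {s ∈ 𝒰 | g ⊆ s} (Finset.subtype (· ∈ V \ g)) β)
    (hlink : {s ∈ 𝒰 | g ⊆ s}.Nonempty) (hβ : 0 ≤ β) (h𝒰 : 𝒰 ⊆ V.powersetCard m) (hgV : g ⊆ V)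
    (hgl : #g ≤ l) (hlV : l ≤ #V) (hk : 0 < k) (hkq : k * q ≤ l - #g) (hmq : 2 * (m - #g) ≤ q)
    (hδ : (m - #g : ℕ) * (2 * (#V - #g : ℕ) / q * β) ≤ 1 / 4) :
    (#V - #g).choose (l - #g) * (1 - Real.exp (-k)) ≤
      (#{t ∈ V.powersetCard l | ∃ s ∈ {s ∈ 𝒰 | g ⊆ s}, s ⊆ t} : ℝ) := by
  have hcard : Fintype.card ↥(V \ g) = #V - #g := by
    rw [Fintype.card_coe, card_sdiff_of_subset hgV]
  have hqV : q ≤ #V - #g := (Nat.le_mul_of_pos_left q hk).trans (by omega)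
  have hmem : ∀ s ∈ {s ∈ 𝒰 | g ⊆ s}, s ⊆ V ∧ #s = m ∧ g ⊆ s := fun s hs => by
    rw [mem_filter] at hs
    exact ⟨(mem_powersetCard.1 (h𝒰 hs.1)).1, (mem_powersetCard.1 (h𝒰 hs.1)).2, hs.2⟩
  have hlink_card : ∀ s ∈ {s ∈ 𝒰 | g ⊆ s}, #(s.subtype (· ∈ V \ g)) = m - #g := fun s hs => by
    obtain ⟨hsV, hsm, hgs⟩ := hmem s hs
    rw [card_subtype_sdiff hgs hsV, hsm]
  refine le_trans ?_ <| choose_mul_sliceDensity_covered_le (fun s hs => (hmem s hs).1) hgV hgl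
  gcongr
  exact hspread.one_sub_exp_neg_le_sliceDensity_covered hlink hβ hlink_card hmq (by omega)
    (by rwa [hcard]) hkq (by omega)

end Link

section Parameters

lemma exists_block_size {m l a : ℕ} {lam : ℝ} (hlam : 1 ≤ lam) (hm : 1 ≤ m) (ham : a ≤ m)
    (hl : 32 * m * lam ≤ l) :
    ∃ k q : ℕ, 0 < k ∧ lam ≤ k ∧ k * q ≤ l - a ∧ 2 * m ≤ q ∧ l ≤ 4 * lam * q := by
  have hm1 : (1 : ℝ) ≤ m := mod_cast hm
  have hml : (m : ℝ) ≤ m * lam := le_mul_of_one_le_right (by linarith) hlam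
  have hlm : lam ≤ m * lam := le_mul_of_one_le_left (by linarith) hm1
  have hal : a ≤ l := ham.trans (by exact_mod_cast (by linarith : (m : ℝ) ≤ l))
  set k := ⌈lam⌉₊
  have hk : lam ≤ k := Nat.le_ceil lam
  have hk2 : (k : ℝ) ≤ 2 * lam := by linarith [Nat.ceil_lt_add_one (zero_le_one.trans hlam)]
  set q := (l - a) / k
  have hkpos : 0 < k := Nat.ceil_pos.2 (by linarith)
  have hkq : (l : ℝ) - a < k * q + k := by
    have := Nat.lt_mul_div_succ (l - a) hkpos
    rw [mul_add_one] at this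
    rw [← Nat.cast_sub hal]
    exact_mod_cast this
  have hlq : (l : ℝ) ≤ 4 * lam * q := by
    have : (k : ℝ) * q ≤ 2 * lam * q := by gcongr
    have : (a : ℝ) ≤ m := mod_cast ham
    linarith
  refine ⟨k, q, hkpos, hk, Nat.mul_div_le _ _, ?_, hlq⟩
  have : lam * (2 * m) ≤ lam * q := by linarith
  exact_mod_cast le_of_mul_le_mul_left this (by linarith)

lemma natCast_le_log_sub_log_div_log {a : ℕ} {r M C : ℝ} (hr : 1 < r) (hM : 0 < M)
    (h : r ^ a * M ≤ C) : (a : ℝ) ≤ (Real.log C - Real.log M) / Real.log r := by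
  have hra : 0 < r ^ a := by positivity
  rw [le_div_iff₀ (Real.log_pos hr), ← Real.log_pow, le_sub_iff_add_le,
    ← Real.log_mul hra.ne' hM.ne']
  exact Real.log_le_log (by positivity) h

lemma secondMoment_exponent_le {ε lam L M M' N Q : ℝ} (hε : 0 < ε) (hlam : 0 < lam)
    (hM : 0 < M) (hM' : 0 ≤ M') (hM'M : M' ≤ M) (hN : 0 < N) (hQ : 0 < Q) (hL : 0 ≤ L)
    (hLQ : L ≤ 4 * lam * Q) :
    M' * (2 * N / Q * (M' * (ε * L / (M ^ 2 * lam)) / N)) ≤ 8 * ε := calc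
  M' * (2 * N / Q * (M' * (ε * L / (M ^ 2 * lam)) / N))
      = 2 * (M' / M) ^ 2 * (ε * (L / (lam * Q))) := by field_simp
  _ ≤ 2 * 1 ^ 2 * (ε * 4) := by
      gcongr
      · rwa [div_le_one hM]
      · rw [div_le_iff₀ (by positivity)]; linarith
  _ = 8 * ε := by ring

end Parameters

theorem stmt_15_general {α : Type*} [DecidableEq α] {V : Finset α} {𝒰 : Finset (Finset α)}
    {m l : ℕ} {ε lam : ℝ} (hε : 0 < ε) (hε₀ : ε ≤ 1 / 32) (hm : 1 ≤ m) (hlam : 1 ≤ lam)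
    (hl : (m : ℝ) ^ 2 * lam / ε < l) (hlV : l ≤ #V) (hne : 𝒰.Nonempty)
    (h𝒰 : 𝒰 ⊆ V.powersetCard m) :
    ∃ g ⊆ V,
      (#g : ℝ) ≤ (Real.log ((#V).choose m) - Real.log #𝒰) /
        Real.log (ε * l / ((m : ℝ) ^ 2 * lam)) ∧
      (#V - #g).choose (l - #g) * (1 - Real.exp (-lam)) ≤
        (#{t ∈ V.powersetCard l | ∃ s ∈ {s ∈ 𝒰 | g ⊆ s}, s ⊆ t} : ℝ) := by
  have hm1 : (1 : ℝ) ≤ m := mod_cast hm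
  have hr : 1 < ε * l / (m ^ 2 * lam) := by
    rwa [one_lt_div (by positivity), ← div_lt_iff₀' hε]
  have hml : 32 * m * lam ≤ l := calc
    32 * m * lam ≤ 32 * m ^ 2 * lam := by gcongr; exact le_self_pow₀ hm1 two_ne_zero
    _ = m ^ 2 * lam / (1 / 32) := by ring
    _ ≤ m ^ 2 * lam / ε := by gcongr
    _ ≤ l := hl.le
  obtain ⟨g, hgV, hgm, hlink, hsize, hspread⟩ := exists_isSpread_link h𝒰 hne (by linarith)
  obtain ⟨k, q, hk, hlamk, hkq, hmq, hlq⟩ := exists_block_size hlam hm hgm hml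
  have hqV : q ≤ #V - #g := (Nat.le_mul_of_pos_left q hk).trans (by omega)
  have hmlam : (m : ℝ) ≤ m * lam := le_mul_of_one_le_right (by positivity) hlam
  have hgl : #g ≤ l := hgm.trans (by exact_mod_cast (by linarith : (m : ℝ) ≤ l))
  have hδ := secondMoment_exponent_le (M := m) (M' := (m - #g : ℕ)) (N := (#V - #g : ℕ)) (Q := q)
    hε (by linarith) (by linarith) (by positivity) (mod_cast m.sub_le #g) (mod_cast (by omega))
    (mod_cast (by omega)) l.cast_nonneg hlq
  refine ⟨g, hgV, natCast_le_log_sub_log_div_log hr (mod_cast hne.card_pos) hsize, ?_⟩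
  refine le_trans ?_ <| hspread.choose_mul_one_sub_exp_neg_le_card_extension hlink
    (by positivity) h𝒰 hgV hgl hlV hk hkq (by omega) (by linarith)
  gcongr

end

theorem stmt_15 :
    ∃ ε₀ : ℝ, 0 < ε₀ ∧ ε₀ < 1 ∧ ∀ ε : ℝ, 0 < ε → ε ≤ ε₀ →
      ∃ lam₀ : ℝ, 1 ≤ lam₀ ∧ ∃ n₀ : ℕ,
        ∀ n : ℕ, n₀ ≤ n → ∀ m : ℕ, 1 ≤ m →
        ∀ lam : ℝ, lam₀ ≤ lam → (m : ℝ) ^ 2 * lam ≤ ε * n →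
        ∀ l : ℕ, (m : ℝ) ^ 2 * lam / ε < l → l ≤ n →
        ∀ U : Finset (Finset ℕ), U.Nonempty → U ⊆ (Finset.Icc 1 n).powersetCard m →
        ∃ g : Finset ℕ, g ⊆ Finset.Icc 1 n ∧
          (g.card : ℝ) ≤ sparsity n m U / Real.log (ε * l / ((m : ℝ) ^ 2 * lam)) ∧
          ((extFam n (U.filter (fun s => g ⊆ s)) l).card : ℝ) ≥
            ((n - g.card).choose (l - g.card) : ℝ) * (1 - Real.exp (-lam)) := by
  refine ⟨1 / 32, by norm_num, by norm_num, fun ε hε hε₀ => ⟨1, le_rfl, 0, ?_⟩⟩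
  intro n _ m hm lam hlam _ l hl hln U hU hUm
  simpa only [Nat.card_Icc, Nat.add_sub_cancel, sparsity, extFam] using
    stmt_15_general (V := Finset.Icc 1 n) hε hε₀ hm hlam hl (by simpa using hln) hU hUm
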